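/- arXiv:2312.09497 — 2 statements merged into one kernel-verified Lean document; each statement's English description precedes it below -/
import Mathlib

section
/- Let α ∈ (0,1) and let R : ℝ² → ℝ² be the map defined by R(x₁,x₂) = (x₁, −3x₂ + 4ψ(x₁)) on each R⁺_{n,k}, R(x₁,x₂) = (x₁, −x₂/3 + (4/3)ψ(x₁)) on each R⁻_{n,k}, and R(x₁,x₂) = (x₁,−x₂) elsewhere. Then: (i) R is bi-Lipschitz on every open set U ⊂ ℝ² with dist(U, Γ) > 0; (ii) there is a constant c > 0 such that at every x = (x₁,x₂) ∈ R⁺_{n,k} ∪ R⁻_{n,k} at which ψ is differentiable at x₁, R is differentiable with |DR(x)| ≤ c·dist(x₁, C)^{α−1}, and the Jacobian determinant satisfies |J_R(x)| = 3 for x ∈ R⁺_{n,k} and |J_R(x)| = 1/3 for x ∈ R⁻_{n,k}. -/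
open MeasureTheory Set Metric Filter Topology
open scoped ENNReal NNReal

noncomputable section

/-- The cusp function `ψ(x) = dist(x, C)^α` on `(0,1)`, zero elsewhere; here `C = cantorSet`
is Mathlib's classical ternary Cantor set. -/
def psiC (α : ℝ) (x : ℝ) : ℝ :=
  if x ∈ Ioo (0 : ℝ) 1 then infDist x cantorSet ^ α else 0

/-- The domain above the Cantor-cuspidal graph. -/
def OmegaPlus (α : ℝ) : Set (ℝ × ℝ) := {x | psiC α x.1 < x.2}

/-- The domain below the Cantor-cuspidal graph. -/
def OmegaMinus (α : ℝ) : Set (ℝ × ℝ) := {x | x.2 < psiC α x.1}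

/-- The Cantor-cuspidal graph `Γ`. -/
def graphC (α : ℝ) : Set (ℝ × ℝ) := {x | x.2 = psiC α x.1}

/-- Left endpoints of the `2^n` level-`n` closed intervals of the ternary Cantor
construction (in bit-reversed order). -/
def lep : ℕ → ℕ → ℝ
  | 0, _ => 0
  | n + 1, k => lep n (k / 2) + ((k % 2 : ℕ) : ℝ) * 2 / 3 ^ (n + 1)

/-- The removed middle-third open interval `I_{n+1}^{k+1}` (here `n ≥ 0`, `k < 2 ^ n`):
the open middle third of the level-`n` closed interval `[lep n k, lep n k + 3⁻ⁿ]`. -/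
def Ink (n k : ℕ) : Set ℝ :=
  Ioo (lep n k + 1 / 3 ^ (n + 1)) (lep n k + 2 / 3 ^ (n + 1))

/-- The set `R⁺_{n,k}` above the graph over `I_{n+1}^{k+1}`. -/
def RP (α : ℝ) (n k : ℕ) : Set (ℝ × ℝ) :=
  {x | x.1 ∈ Ink n k ∧ psiC α x.1 < x.2 ∧ x.2 < 2 * psiC α x.1}

/-- The set `R⁻_{n,k}` below the graph over `I_{n+1}^{k+1}`. -/
def RM (α : ℝ) (n k : ℕ) : Set (ℝ × ℝ) :=
  {x | x.1 ∈ Ink n k ∧ -(2 * psiC α x.1) < x.2 ∧ x.2 < psiC α x.1}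

/-- The union `⋃_{n,k} R⁺_{n,k}`. -/
def RPall (α : ℝ) : Set (ℝ × ℝ) := ⋃ n, ⋃ k ∈ {k : ℕ | k < 2 ^ n}, RP α n k

/-- The union `⋃_{n,k} R⁻_{n,k}`. -/
def RMall (α : ℝ) : Set (ℝ × ℝ) := ⋃ n, ⋃ k ∈ {k : ℕ | k < 2 ^ n}, RM α n k

open Classical in
/-- The explicit reflection over the Cantor-cuspidal graph `Γ`. -/
def reflMap (α : ℝ) (x : ℝ × ℝ) : ℝ × ℝ :=
  if x ∈ RPall α then (x.1, -3 * x.2 + 4 * psiC α x.1)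
  else if x ∈ RMall α then (x.1, -x.2 / 3 + 4 / 3 * psiC α x.1)
  else (x.1, -x.2)

theorem lep_left (n : ℕ) : ∀ k : ℕ, k < 2 ^ n → lep (n + 1) k = lep n k / 3 := by
  induction n with
  | zero =>
    intro k hk
    have : k = 0 := by simpa using hk
    subst this
    simp [lep]
  | succ n ih =>
    intro k hk
    have hk2 : k / 2 < 2 ^ n := by rw [pow_succ] at hk; omega
    have h1 : lep (n + 1 + 1) k
        = lep (n + 1) (k / 2) + ((k % 2 : ℕ) : ℝ) * 2 / 3 ^ (n + 1 + 1) := rfl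
    have h2 : lep (n + 1) k = lep n (k / 2) + ((k % 2 : ℕ) : ℝ) * 2 / 3 ^ (n + 1) := rfl
    rw [h1, h2, ih _ hk2, pow_succ (3 : ℝ) (n + 1)]
    field_simp

theorem lep_right (n : ℕ) : ∀ k : ℕ, k < 2 ^ n →
    lep (n + 1) (k + 2 ^ n) = lep n k / 3 + 2 / 3 := by
  induction n with
  | zero =>
    intro k hk
    have : k = 0 := by simpa using hk
    subst this
    simp [lep]
  | succ n ih =>
    intro k hk
    have hk2 : k / 2 < 2 ^ n := by rw [pow_succ] at hk; omega
    have h1 : lep (n + 1 + 1) (k + 2 ^ (n + 1)) = lep (n + 1) ((k + 2 ^ (n + 1)) / 2)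
        + (((k + 2 ^ (n + 1)) % 2 : ℕ) : ℝ) * 2 / 3 ^ (n + 1 + 1) := rfl
    have h2 : lep (n + 1) k = lep n (k / 2) + ((k % 2 : ℕ) : ℝ) * 2 / 3 ^ (n + 1) := rfl
    have h3 : (k + 2 ^ (n + 1)) / 2 = k / 2 + 2 ^ n := by rw [pow_succ]; omega
    have h4 : (k + 2 ^ (n + 1)) % 2 = k % 2 := by rw [pow_succ]; omega
    rw [h1, h2, h3, h4, ih _ hk2, pow_succ (3 : ℝ) (n + 1)]
    field_simp
    ring

theorem exists_Ink (n : ℕ) : ∀ x : ℝ, 0 ≤ x → x ≤ 1 → x ∉ preCantorSet n →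
    ∃ m k : ℕ, k < 2 ^ m ∧ x ∈ Ink m k := by
  induction n with
  | zero =>
    intro x h0 h1 hx
    exact absurd (by simp [h0, h1]) hx
  | succ n ih =>
    intro x h0 h1 hx
    rw [preCantorSet_succ] at hx
    simp only [mem_union, not_or] at hx
    obtain ⟨hl, hr⟩ := hx
    by_cases hx1 : x ≤ 1 / 3
    · obtain ⟨m, k, hk, hm⟩ := ih (3 * x) (by linarith) (by linarith)
        (fun h => hl ⟨3 * x, h, by simp⟩)
      refine ⟨m + 1, k, by rw [pow_succ]; omega, ?_⟩
      simp only [Ink, mem_Ioo, lep_left m k hk] at hm ⊢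
      have e1 : (1 : ℝ) / 3 ^ (m + 1 + 1) = 1 / 3 ^ (m + 1) / 3 := by
        rw [pow_succ (3 : ℝ) (m + 1)]; field_simp
      have e2 : (2 : ℝ) / 3 ^ (m + 1 + 1) = 2 / 3 ^ (m + 1) / 3 := by
        rw [pow_succ (3 : ℝ) (m + 1)]; field_simp
      rw [e1, e2]
      constructor <;> linarith [hm.1, hm.2]
    · by_cases hx2 : 2 / 3 ≤ x
      · obtain ⟨m, k, hk, hm⟩ := ih (3 * x - 2) (by linarith) (by linarith)
          (fun h => hr ⟨3 * x - 2, h, by ring⟩)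
        refine ⟨m + 1, k + 2 ^ m, by rw [pow_succ]; omega, ?_⟩
        simp only [Ink, mem_Ioo, lep_right m k hk] at hm ⊢
        have e1 : (1 : ℝ) / 3 ^ (m + 1 + 1) = 1 / 3 ^ (m + 1) / 3 := by
          rw [pow_succ (3 : ℝ) (m + 1)]; field_simp
        have e2 : (2 : ℝ) / 3 ^ (m + 1 + 1) = 2 / 3 ^ (m + 1) / 3 := by
          rw [pow_succ (3 : ℝ) (m + 1)]; field_simp
        rw [e1, e2]
        constructor <;> linarith [hm.1, hm.2]
      · refine ⟨0, 0, by simp, ?_⟩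
        simp only [Ink, lep, mem_Ioo]
        push Not at hx1 hx2
        constructor <;> linarith

theorem psiC_nonneg (α x : ℝ) : 0 ≤ psiC α x := by
  unfold psiC
  split_ifs
  · exact Real.rpow_nonneg infDist_nonneg _
  · exact le_rfl

theorem psiC_pos_mem {α x : ℝ} (h : 0 < psiC α x) : x ∈ Ioo (0 : ℝ) 1 := by
  unfold psiC at h
  split_ifs at h with h1
  · exact h1
  · exact absurd h (lt_irrefl _)

theorem psiC_pos_infDist {α x : ℝ} (hα : 0 < α) (h : 0 < psiC α x) :
    0 < infDist x cantorSet := by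
  have hm := psiC_pos_mem h
  unfold psiC at h
  rw [if_pos hm] at h
  rcases infDist_nonneg.eq_or_lt' (a := infDist x cantorSet) with h0 | h0
  · rw [h0, Real.zero_rpow hα.ne'] at h
    exact absurd h (lt_irrefl _)
  · exact h0

theorem psiC_pos_Ink {α x : ℝ} (hα : 0 < α) (h : 0 < psiC α x) :
    ∃ m k : ℕ, k < 2 ^ m ∧ x ∈ Ink m k := by
  have hm := psiC_pos_mem h
  have hd := psiC_pos_infDist hα h
  have hx : x ∉ cantorSet := fun hx => by
    rw [infDist_zero_of_mem hx] at hd; exact lt_irrefl _ hd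
  simp only [cantorSet, iInf_eq_iInter, mem_iInter, not_forall] at hx
  obtain ⟨n, hn⟩ := hx
  exact exists_Ink n x hm.1.le hm.2.le hn

theorem mem_RPall {α : ℝ} (hα : 0 < α) (x : ℝ × ℝ) :
    x ∈ RPall α ↔ psiC α x.1 < x.2 ∧ x.2 < 2 * psiC α x.1 := by
  simp only [RPall, mem_iUnion, RP, mem_setOf_eq]
  constructor
  · rintro ⟨n, k, _, _, h⟩
    exact h
  · intro h
    obtain ⟨m, k, hk, hx⟩ := psiC_pos_Ink hα (show 0 < psiC α x.1 by linarith [h.1, h.2])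
    exact ⟨m, k, hk, hx, h⟩

theorem mem_RMall {α : ℝ} (hα : 0 < α) (x : ℝ × ℝ) :
    x ∈ RMall α ↔ -(2 * psiC α x.1) < x.2 ∧ x.2 < psiC α x.1 := by
  simp only [RMall, mem_iUnion, RM, mem_setOf_eq]
  constructor
  · rintro ⟨n, k, _, _, h⟩
    exact h
  · intro h
    obtain ⟨m, k, hk, hx⟩ := psiC_pos_Ink hα (show 0 < psiC α x.1 by linarith [h.1, h.2])
    exact ⟨m, k, hk, hx, h⟩

/-- The vertical reflection profile. -/
def hRef (p t : ℝ) : ℝ := max (-t) (min ((4 * p - t) / 3) (4 * p - 3 * t))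

theorem hRef_invol {p : ℝ} (hp : 0 ≤ p) (t : ℝ) : hRef p (hRef p t) = t := by
  unfold hRef
  rcases max_cases (-t) (min ((4 * p - t) / 3) (4 * p - 3 * t)) with ⟨h1, h2⟩ | ⟨h1, h2⟩ <;>
  rcases min_cases ((4 * p - t) / 3) (4 * p - 3 * t) with ⟨h3, h4⟩ | ⟨h3, h4⟩ <;>
  rw [h1] <;> simp only [h3] at * <;>
  grind

theorem hRef_lip (p q s t : ℝ) : |hRef p s - hRef q t| ≤ 3 * |s - t| + 4 * |p - q| := by
  unfold hRef
  refine (abs_max_sub_max_le_max _ _ _ _).trans (max_le ?_ ((abs_min_sub_min_le_max _ _ _ _).trans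
    (max_le ?_ ?_)))
  all_goals
    rw [abs_le]
    constructor <;>
    linarith [le_abs_self (s - t), neg_abs_le (s - t), le_abs_self (p - q), neg_abs_le (p - q)]

/-- Auxiliary closed set. -/
def CC : Set ℝ := cantorSet ∪ (Ioo (0 : ℝ) 1)ᶜ

theorem one_mem_cantor : (1 : ℝ) ∈ cantorSet := by
  simp only [cantorSet, iInf_eq_iInter, mem_iInter]
  intro n
  induction n with
  | zero => simp
  | succ n ih =>
    rw [preCantorSet_succ]
    exact Or.inr ⟨1, ih, by norm_num⟩

theorem infDist_CC {x : ℝ} (hx : x ∈ Ioo (0 : ℝ) 1) : infDist x CC = infDist x cantorSet := by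
  apply le_antisymm
  · exact infDist_le_infDist_of_subset subset_union_left ⟨1, one_mem_cantor⟩
  · rw [le_infDist (s := CC) ⟨(1 : ℝ), Or.inl one_mem_cantor⟩]
    rintro y (hy | hy)
    · exact infDist_le_dist_of_mem hy
    · by_cases h0 : y ≤ 0
      · refine (infDist_le_dist_of_mem zero_mem_cantorSet).trans ?_
        rw [Real.dist_eq, Real.dist_eq, abs_of_pos (by linarith [hx.1]),
          abs_of_pos (by linarith [hx.1])]
        linarith
      · have h1 : 1 ≤ y := by
          by_contra h
          exact hy ⟨not_le.1 h0, not_le.1 h⟩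
        refine (infDist_le_dist_of_mem one_mem_cantor).trans ?_
        rw [Real.dist_eq, Real.dist_eq, abs_of_neg (by linarith [hx.2]),
          abs_of_neg (by linarith [hx.2])]
        linarith

theorem psiC_eq {α : ℝ} (hα : 0 < α) (x : ℝ) : psiC α x = infDist x CC ^ α := by
  unfold psiC
  split_ifs with h
  · rw [infDist_CC h]
  · rw [infDist_zero_of_mem (show x ∈ CC from Or.inr h), Real.zero_rpow hα.ne']

theorem rpow_lip {α δ : ℝ} (hα : 0 < α) (hα1 : α < 1) (hδ : 0 < δ) {a b : ℝ}
    (ha : δ ≤ a) (hb : δ ≤ b) : |a ^ α - b ^ α| ≤ δ ^ (α - 1) * |a - b| := by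
  have := (convex_Ici δ).norm_image_sub_le_of_norm_hasDerivWithin_le
    (f := fun t : ℝ => t ^ α) (f' := fun t => α * t ^ (α - 1)) (C := δ ^ (α - 1))
    (fun t ht => (Real.hasDerivAt_rpow_const (Or.inl (hδ.trans_le ht).ne')).hasDerivWithinAt)
    (fun t ht => by
      have ht0 : 0 < t := hδ.trans_le ht
      have h1 : t ^ (α - 1) ≤ δ ^ (α - 1) := Real.rpow_le_rpow_of_nonpos hδ ht (by linarith)
      have h2 : 0 < t ^ (α - 1) := Real.rpow_pos_of_pos ht0 _
      rw [Real.norm_of_nonneg (by positivity)]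
      nlinarith) hb ha
  simpa using this

theorem phi_lip {α e : ℝ} (hα : 0 < α) (hα1 : α < 1) (he : 0 < e) :
    ∃ L : ℝ, 0 ≤ L ∧ ∀ x y : ℝ, |max (psiC α x) e - max (psiC α y) e| ≤ L * |x - y| := by
  set δ := e ^ (1 / α) with hδ
  have hδ0 : 0 < δ := Real.rpow_pos_of_pos he _
  have heq : δ ^ α = e := by
    rw [hδ, ← Real.rpow_mul he.le, one_div_mul_cancel hα.ne', Real.rpow_one]
  have key : ∀ x, max (psiC α x) e = (max (infDist x CC) δ) ^ α := by
    intro x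
    rw [psiC_eq hα, ← heq]
    exact ((Real.monotoneOn_rpow_Ici_of_exponent_nonneg hα.le).map_max
      (infDist_nonneg (x := x) (s := CC)) hδ0.le).symm
  refine ⟨δ ^ (α - 1), (Real.rpow_pos_of_pos hδ0 _).le, fun x y => ?_⟩
  rw [key, key]
  refine (rpow_lip hα hα1 hδ0 (le_max_right _ _) (le_max_right _ _)).trans ?_
  refine mul_le_mul_of_nonneg_left ?_ (Real.rpow_pos_of_pos hδ0 _).le
  refine (abs_max_sub_max_le_max _ _ _ _).trans (max_le ?_ (by simp))
  have := (lipschitz_infDist_pt CC).dist_le_mul x y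
  simpa [Real.dist_eq] using this

/-- Globally Lipschitz model of the reflection. -/
def HRef (α e : ℝ) (x : ℝ × ℝ) : ℝ × ℝ := (x.1, hRef (max (psiC α x.1) e) x.2)

theorem HRef_lip {α e : ℝ} (hα : 0 < α) (hα1 : α < 1) (he : 0 < e) :
    ∃ K : ℝ, 1 ≤ K ∧ ∀ x y, dist (HRef α e x) (HRef α e y) ≤ K * dist x y := by
  obtain ⟨L, hL, h⟩ := phi_lip hα hα1 he
  refine ⟨3 + 4 * L, by linarith, fun x y => ?_⟩
  have h1 : |x.1 - y.1| ≤ dist x y := by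
    rw [Prod.dist_eq, ← Real.dist_eq]; exact le_max_left _ _
  have h2 : |x.2 - y.2| ≤ dist x y := by
    rw [Prod.dist_eq, ← Real.dist_eq]; exact le_max_right _ _
  have h0 : 0 ≤ dist x y := dist_nonneg
  rw [Prod.dist_eq (x := HRef α e x)]
  refine max_le ?_ ?_
  · rw [Real.dist_eq]
    show |x.1 - y.1| ≤ _
    nlinarith
  · rw [Real.dist_eq]
    refine (hRef_lip _ _ _ _).trans ?_
    have h3 := h x.1 y.1
    have h4 := mul_le_mul_of_nonneg_left h1 hL
    linarith

theorem HRef_invol {α e : ℝ} (he : 0 < e) (x : ℝ × ℝ) : HRef α e (HRef α e x) = x := by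
  unfold HRef
  ext
  · rfl
  · exact hRef_invol (he.le.trans (le_max_right _ _)) _

theorem reflMap_eq {α ε : ℝ} (hα : 0 < α) (hε : 0 < ε) (x : ℝ × ℝ)
    (hx : ∀ y ∈ graphC α, ε ≤ dist x y) : reflMap α x = HRef α (ε / 3) x := by
  have h1 : ε ≤ |x.2 - psiC α x.1| := by
    have := hx (x.1, psiC α x.1) rfl
    rwa [Prod.dist_eq, dist_self, max_eq_right dist_nonneg, Real.dist_eq] at this
  have h0 := psiC_nonneg α x.1
  unfold reflMap HRef hRef
  rw [mem_RPall hα, mem_RMall hα]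
  generalize psiC α x.1 = p at *
  generalize x.2 = t at *
  rcases le_abs.1 h1 with h | h <;> split_ifs with ha hb <;> congr 1 <;> grind

theorem det_aux (a b : ℝ) : (((ContinuousLinearMap.fst ℝ ℝ ℝ).prod
    (b • ContinuousLinearMap.snd ℝ ℝ ℝ + a • ContinuousLinearMap.fst ℝ ℝ ℝ)) :
      ℝ × ℝ →L[ℝ] ℝ × ℝ).det = b := by
  rw [ContinuousLinearMap.det, ← LinearMap.det_toMatrix (Module.Basis.finTwoProd ℝ), Matrix.det_fin_two]
  simp [LinearMap.toMatrix_apply]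

theorem norm_aux (a b M : ℝ) (h1 : 1 ≤ M) (h : |b| + |a| ≤ M) :
    ‖(((ContinuousLinearMap.fst ℝ ℝ ℝ).prod
    (b • ContinuousLinearMap.snd ℝ ℝ ℝ + a • ContinuousLinearMap.fst ℝ ℝ ℝ)) :
      ℝ × ℝ →L[ℝ] ℝ × ℝ)‖ ≤ M := by
  refine ContinuousLinearMap.opNorm_le_bound _ (by linarith) fun v => ?_
  have hv1 : |v.1| ≤ ‖v‖ := norm_fst_le v
  have hv2 : |v.2| ≤ ‖v‖ := norm_snd_le v
  have h0 := norm_nonneg v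
  rw [Prod.norm_def]
  refine max_le ?_ ?_
  · show |v.1| ≤ _
    nlinarith
  · show |b * v.2 + a * v.1| ≤ _
    refine (abs_add_le _ _).trans ?_
    rw [abs_mul, abs_mul]
    nlinarith [mul_le_mul_of_nonneg_left hv1 (abs_nonneg a),
      mul_le_mul_of_nonneg_left hv2 (abs_nonneg b), mul_le_mul_of_nonneg_right h h0]

theorem deriv_psiC_le {α x : ℝ} (hα : 0 < α) (hα1 : α < 1) (h : 0 < psiC α x)
    (hd : DifferentiableAt ℝ (psiC α) x) :
    |deriv (psiC α) x| ≤ infDist x cantorSet ^ (α - 1) ∧ 1 ≤ infDist x cantorSet ^ (α - 1) := by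
  have hm := psiC_pos_mem h
  have hpos := psiC_pos_infDist hα h
  have hle : infDist x cantorSet ≤ 1 := by
    refine (infDist_le_dist_of_mem zero_mem_cantorSet).trans ?_
    rw [Real.dist_eq, sub_zero, abs_of_pos hm.1]
    exact hm.2.le
  refine ⟨?_, Real.one_le_rpow_of_pos_of_le_one_of_nonpos hpos hle (by linarith)⟩
  have hfun : (fun y => infDist y CC) = fun y => psiC α y ^ (1 / α) := by
    ext y
    rw [psiC_eq hα, ← Real.rpow_mul infDist_nonneg, mul_one_div_cancel hα.ne', Real.rpow_one]
  have hdd : DifferentiableAt ℝ (fun y => infDist y CC) x := by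
    rw [hfun]
    exact hd.rpow_const (Or.inl h.ne')
  have hder := hdd.hasDerivAt.rpow_const (p := α) (Or.inl (by rw [infDist_CC hm]; exact hpos.ne'))
  have hfun2 : psiC α = fun y => infDist y CC ^ α := funext (psiC_eq hα)
  have hb : |deriv (fun y => infDist y CC) x| ≤ 1 := by
    have := norm_deriv_le_of_lipschitz (x₀ := x) (lipschitz_infDist_pt CC)
    simpa using this
  rw [hfun2, hder.deriv, infDist_CC hm, abs_mul, abs_mul, abs_of_pos hα,
    abs_of_pos (Real.rpow_pos_of_pos hpos _)]
  have h2 := Real.rpow_pos_of_pos hpos (α - 1)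
  have h3 : |deriv (fun y => infDist y CC) x| * α ≤ 1 := by nlinarith
  nlinarith

theorem isNhds_aux {α : ℝ} {x : ℝ × ℝ} (hd : DifferentiableAt ℝ (psiC α) x.1) :
    ContinuousAt (fun y : ℝ × ℝ => psiC α y.1) x :=
  ContinuousAt.comp (f := Prod.fst) hd.continuousAt continuousAt_fst

theorem hasFDeriv_aux {α : ℝ} {x : ℝ × ℝ} (a b : ℝ) (hd : DifferentiableAt ℝ (psiC α) x.1) :
    HasFDerivAt (fun y : ℝ × ℝ => (y.1, b * y.2 + a * psiC α y.1))
      ((ContinuousLinearMap.fst ℝ ℝ ℝ).prod (b • ContinuousLinearMap.snd ℝ ℝ ℝ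
        + (a * deriv (psiC α) x.1) • ContinuousLinearMap.fst ℝ ℝ ℝ)) x := by
  refine hasFDerivAt_fst.prodMk ((hasFDerivAt_snd.const_mul b).add ?_)
  have := (hd.hasDerivAt.comp_hasFDerivAt x (hasFDerivAt_fst (𝕜 := ℝ) (p := x))).const_mul a
  rw [mul_smul]
  exact this


/-- (i) `reflMap` is bi-Lipschitz on every open set at positive distance from `Γ`;
(ii) there is `c > 0` such that at every point `x` of `R⁺_{n,k} ∪ R⁻_{n,k}` where `ψ` is
differentiable at `x₁`, `reflMap` is differentiable with `‖D(reflMap)(x)‖ ≤ c·dist(x₁,C)^(α−1)`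
and Jacobian determinant of absolute value `3` on `R⁺_{n,k}` and `1/3` on `R⁻_{n,k}`. -/
theorem reflMap_biLipschitz_and_derivative (α : ℝ) (hα₀ : 0 < α) (hα₁ : α < 1) :
    (∀ U : Set (ℝ × ℝ), IsOpen U →
      (∃ ε : ℝ, 0 < ε ∧ ∀ x ∈ U, ∀ y ∈ graphC α, ε ≤ dist x y) →
      ∃ K : ℝ, 1 ≤ K ∧ ∀ x ∈ U, ∀ y ∈ U,
        dist x y / K ≤ dist (reflMap α x) (reflMap α y) ∧
        dist (reflMap α x) (reflMap α y) ≤ K * dist x y) ∧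
    (∃ c : ℝ, 0 < c ∧ ∀ n k : ℕ, k < 2 ^ n → ∀ x ∈ RP α n k ∪ RM α n k,
      DifferentiableAt ℝ (psiC α) x.1 →
      ∃ D : ℝ × ℝ →L[ℝ] ℝ × ℝ, HasFDerivAt (reflMap α) D x ∧
        ‖D‖ ≤ c * infDist x.1 cantorSet ^ (α - 1) ∧
        (x ∈ RP α n k → |D.det| = 3) ∧ (x ∈ RM α n k → |D.det| = 1 / 3)) := by
  refine ⟨?_, 7, by norm_num, ?_⟩
  · rintro U - ⟨ε, hε, hU⟩
    obtain ⟨K, hK, hlip⟩ := HRef_lip (e := ε / 3) hα₀ hα₁ (by linarith)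
    refine ⟨K, hK, fun x hx y hy => ?_⟩
    rw [reflMap_eq hα₀ hε x (hU x hx), reflMap_eq hα₀ hε y (hU y hy)]
    refine ⟨?_, hlip x y⟩
    rw [div_le_iff₀ (by linarith), mul_comm]
    have := hlip (HRef α (ε / 3) x) (HRef α (ε / 3) y)
    rwa [HRef_invol (by linarith), HRef_invol (by linarith)] at this
  · intro n k _ x hx hd
    have hc := isNhds_aux hd
    have hc2 : ContinuousAt (fun y : ℝ × ℝ => y.2) x := continuousAt_snd
    rcases hx with hx | hx
    · obtain ⟨-, h1, h2⟩ := hx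
      obtain ⟨hb1, hb2⟩ := deriv_psiC_le hα₀ hα₁ (show 0 < psiC α x.1 by linarith) hd
      refine ⟨_, (hasFDeriv_aux 4 (-3) hd).congr_of_eventuallyEq ?_, ?_, ?_, ?_⟩
      · filter_upwards [hc.eventually_lt hc2 h1, hc2.eventually_lt (hc.const_mul 2) h2]
          with y hy1 hy2
        unfold reflMap
        rw [if_pos ((mem_RPall hα₀ y).2 ⟨hy1, hy2⟩)]
      · refine norm_aux _ _ _ (by linarith) ?_
        rw [abs_mul]
        norm_num
        linarith
      · intro _
        rw [det_aux]
        norm_num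
      · rintro ⟨-, -, h3⟩
        linarith
    · obtain ⟨-, h1, h2⟩ := hx
      obtain ⟨hb1, hb2⟩ := deriv_psiC_le hα₀ hα₁ (show 0 < psiC α x.1 by linarith) hd
      refine ⟨_, (hasFDeriv_aux (4 / 3) (-1 / 3) hd).congr_of_eventuallyEq ?_, ?_, ?_, ?_⟩
      · filter_upwards [hc2.eventually_lt hc h2, (hc.const_mul 2).neg.eventually_lt hc2 h1]
          with y hy1 hy2
        unfold reflMap
        rw [if_neg (fun h => by linarith [((mem_RPall hα₀ y).1 h).1]),
          if_pos ((mem_RMall hα₀ y).2 ⟨hy2, hy1⟩)]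
        ext
        · rfl
        · show -y.2 / 3 + 4 / 3 * psiC α y.1 = -1 / 3 * y.2 + 4 / 3 * psiC α y.1
          ring
      · refine norm_aux _ _ _ (by linarith) ?_
        rw [abs_mul]
        norm_num [abs_div]
        linarith
      · rintro ⟨-, h3, -⟩
        linarith
      · intro _
        rw [det_aux]
        norm_num [abs_div]
end
end

section
/- Let (log 2)/(2 log 3) < α < 1, and let p, q satisfy ((1+α) − (log 2)/(log 3))/(2α − (log 2)/(log 3)) < p < ∞ and 1 ≤ q < ((1+α) − (log 2)/(log 3))·p / ((1+α) − (log 2)/(log 3) + (1−α)p). Then the integral over ⋃_{n≥1} ⋃_{k=1}^{2^{n−1}} R⁺_{n,k} of dist(x₁, C)^{(α−1)·pq/(p−q)} dx₁ dx₂ is finite. Consequently, the series Σ_{n≥1} 2ⁿ · (3^{−n})^{1 + α + (α−1)pq/(p−q)} converges. -/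
open MeasureTheory Set Metric Filter Topology
open scoped ENNReal NNReal

noncomputable section

theorem lep_nonneg (n k : ℕ) : 0 ≤ lep n k := by
  induction n generalizing k with
  | zero => simp [lep]
  | succ n ih => have := ih (k / 2); simp only [lep]; positivity

theorem lep_le (n k : ℕ) : lep n k + 1 / 3 ^ n ≤ 1 := by
  induction n generalizing k with
  | zero => simp [lep]
  | succ n ih =>
    have h := ih (k / 2)
    simp only [lep]
    have h2 : ((k % 2 : ℕ) : ℝ) ≤ 1 := by
      exact_mod_cast Nat.lt_succ_iff.mp (Nat.mod_lt k (by norm_num))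
    have h3 : (0 : ℝ) < 1 / 3 ^ (n + 1) := by positivity
    have h4 : (1 : ℝ) / 3 ^ n = 3 * (1 / 3 ^ (n + 1)) := by rw [pow_succ]; field_simp
    have h5 : ((k % 2 : ℕ) : ℝ) * 2 / 3 ^ (n + 1) = 2 * ((k % 2 : ℕ) : ℝ) * (1 / 3 ^ (n + 1)) := by ring
    rw [h5]; rw [h4] at h
    nlinarith

theorem lep_lo (n k : ℕ) (hk : k < 2 ^ n) : lep (n + 1) k = lep n k / 3 := by
  induction n generalizing k with
  | zero => have : k = 0 := by simpa using hk
            subst this; simp [lep]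
  | succ n ih =>
    have h := ih (k / 2) (by rw [pow_succ] at hk; omega)
    rw [lep, h, lep]
    rw [pow_succ 3 (n + 1)]; field_simp

theorem lep_hi (n k : ℕ) (hk : k < 2 ^ n) : lep (n + 1) (2 ^ n + k) = 2 / 3 + lep n k / 3 := by
  induction n generalizing k with
  | zero => have : k = 0 := by simpa using hk
            subst this; simp [lep]
  | succ n ih =>
    have h := ih (k / 2) (by rw [pow_succ] at hk; omega)
    have e1 : (2 ^ (n + 1) + k) / 2 = 2 ^ n + k / 2 := by rw [pow_succ]; omega
    have e2 : (2 ^ (n + 1) + k) % 2 = k % 2 := by rw [pow_succ]; omega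
    rw [lep, e1, e2, h, lep]
    rw [pow_succ 3 (n + 1)]; field_simp; ring

theorem Ink_disj (n k : ℕ) (hk : k < 2 ^ n) (x : ℝ) (hx : x ∈ Ink n k) : x ∉ cantorSet := by
  induction n generalizing k x with
  | zero =>
    intro hc
    rw [cantorSet_eq_union_halves] at hc
    simp only [Ink, lep, mem_Ioo] at hx
    norm_num at hx
    rcases hc with ⟨y, hy, rfl⟩ | ⟨y, hy, rfl⟩ <;>
    · have := cantorSet_subset_unitInterval hy
      simp only [mem_Icc] at this
      linarith [this.1, this.2]
  | succ n ih =>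
    intro hc
    rw [cantorSet_eq_union_halves] at hc
    have h0 := lep_nonneg
    have h1 := lep_le
    have e0 : (0 : ℝ) < 1 / 3 ^ (n + 1) := by positivity
    have e1 : (1 : ℝ) / 3 ^ (n + 1 + 1) = (1 / 3 ^ (n + 1)) / 3 := by
      rw [pow_succ 3 (n + 1)]; field_simp
    have e2 : (2 : ℝ) / 3 ^ (n + 1 + 1) = 2 * (1 / 3 ^ (n + 1)) / 3 := by
      rw [pow_succ 3 (n + 1)]; field_simp
    have e3 : (2 : ℝ) / 3 ^ (n + 1) = 2 * (1 / 3 ^ (n + 1)) := by ring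
    have e4 : (1 : ℝ) / 3 ^ n = 3 * (1 / 3 ^ (n + 1)) := by rw [pow_succ]; field_simp
    rw [Ink, e1, e2, mem_Ioo] at hx
    have key : ∀ j < 2 ^ n, ∀ y ∈ cantorSet,
        ¬ (lep n j + 1 / 3 ^ (n + 1) < y ∧ y < lep n j + 2 * (1 / 3 ^ (n + 1))) := by
      intro j hj y hy h
      refine ih j hj y ?_ hy
      rw [Ink, e3]; exact h
    rcases lt_or_ge k (2 ^ n) with hk' | hk'
    · rw [lep_lo n k hk'] at hx
      have a0 := h0 n k
      have a1 := h1 n k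
      rw [e4] at a1
      rcases hc with ⟨y, hy, rfl⟩ | ⟨y, hy, rfl⟩
      · exact key k hk' y hy ⟨by simp only at hx; linarith [hx.1], by simp only at hx; linarith [hx.2]⟩
      · have := cantorSet_subset_unitInterval hy
        simp only [mem_Icc] at this hx
        linarith [this.1, this.2, hx.1, hx.2]
    · obtain ⟨j, rfl⟩ := Nat.exists_eq_add_of_le hk'
      have hj : j < 2 ^ n := by rw [pow_succ] at hk; omega
      rw [lep_hi n j hj] at hx
      have a0 := h0 n j
      have a1 := h1 n j
      rw [e4] at a1
      rcases hc with ⟨y, hy, rfl⟩ | ⟨y, hy, rfl⟩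
      · have := cantorSet_subset_unitInterval hy
        simp only [mem_Icc] at this hx
        linarith [this.1, this.2, hx.1, hx.2]
      · exact key j hj y hy ⟨by simp only at hx; linarith [hx.1], by simp only at hx; linarith [hx.2]⟩

theorem Ink_sub (n k : ℕ) (x : ℝ) (hx : x ∈ Ink n k) : x ∈ Ioo (0 : ℝ) 1 := by
  have a0 := lep_nonneg n k
  have a1 := lep_le n k
  have e0 : (0 : ℝ) < 1 / 3 ^ (n + 1) := by positivity
  have e4 : (1 : ℝ) / 3 ^ n = 3 * (1 / 3 ^ (n + 1)) := by rw [pow_succ]; field_simp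
  have e3 : (2 : ℝ) / 3 ^ (n + 1) = 2 * (1 / 3 ^ (n + 1)) := by ring
  rw [Ink, e3, mem_Ioo] at hx
  rw [e4] at a1
  exact ⟨by linarith [hx.1], by linarith [hx.2]⟩

theorem infDist_lower (n k : ℕ) (hk : k < 2 ^ n) (x : ℝ) (hx : x ∈ Ink n k) :
    min (x - (lep n k + 1 / 3 ^ (n + 1))) ((lep n k + 2 / 3 ^ (n + 1)) - x)
      ≤ infDist x cantorSet := by
  rw [le_infDist ⟨0, zero_mem_cantorSet⟩]
  intro y hy
  by_contra! h
  rw [lt_min_iff, Real.dist_eq, abs_lt, abs_lt] at h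
  exact Ink_disj n k hk y ⟨by linarith [h.1.2], by linarith [h.2.1]⟩ hy

theorem infDist_le_one (x : ℝ) (hx : x ∈ Ioo (0 : ℝ) 1) : infDist x cantorSet ≤ 1 := by
  refine (infDist_le_dist_of_mem zero_mem_cantorSet).trans ?_
  rw [Real.dist_eq, sub_zero, abs_of_pos hx.1]; exact hx.2.le

theorem lint_left (a l t : ℝ) (hl : 0 < l) (ht : -1 < t) :
    ∫⁻ x in Ioo a (a + l), ENNReal.ofReal ((x - a) ^ t) = ENNReal.ofReal (l ^ (t + 1) / (t + 1)) := by
  have hi : IntervalIntegrable (fun x : ℝ => (x - a) ^ t) volume a (a + l) := by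
    have := (intervalIntegral.intervalIntegrable_rpow' (a := 0) (b := l) ht).comp_sub_right a
    simpa [add_comm] using this
  have hI : ∫ x in a..(a + l), (x - a) ^ t = l ^ (t + 1) / (t + 1) := by
    rw [intervalIntegral.integral_comp_sub_right (fun x => x ^ t) a, integral_rpow (Or.inl ht)]
    rw [sub_self, Real.zero_rpow (by linarith)]; simp
  rw [intervalIntegrable_iff_integrableOn_Ioo_of_le (by linarith)] at hi
  rw [← hI, intervalIntegral.integral_of_le (by linarith), integral_Ioc_eq_integral_Ioo,
    ofReal_integral_eq_lintegral_ofReal hi]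
  refine (ae_restrict_iff' measurableSet_Ioo).2 (Eventually.of_forall fun x hx => ?_)
  exact Real.rpow_nonneg (by linarith [hx.1]) _

theorem lint_right (b l t : ℝ) (hl : 0 < l) (ht : -1 < t) :
    ∫⁻ x in Ioo (b - l) b, ENNReal.ofReal ((b - x) ^ t) = ENNReal.ofReal (l ^ (t + 1) / (t + 1)) := by
  have hi : IntervalIntegrable (fun x : ℝ => (b - x) ^ t) volume (b - l) b := by
    have := (intervalIntegral.intervalIntegrable_rpow' (a := 0) (b := l) ht).comp_sub_left b
    simpa using this.symm
  have hI : ∫ x in (b - l)..b, (b - x) ^ t = l ^ (t + 1) / (t + 1) := by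
    rw [intervalIntegral.integral_comp_sub_left (fun x => x ^ t) b, integral_rpow (Or.inl ht)]
    rw [sub_self, Real.zero_rpow (by linarith)]; simp
  rw [intervalIntegrable_iff_integrableOn_Ioo_of_le (by linarith)] at hi
  rw [← hI, intervalIntegral.integral_of_le (by linarith), integral_Ioc_eq_integral_Ioo,
    ofReal_integral_eq_lintegral_ofReal hi]
  refine (ae_restrict_iff' measurableSet_Ioo).2 (Eventually.of_forall fun x hx => ?_)
  exact Real.rpow_nonneg (by linarith [hx.2]) _

theorem measurable_psiC (α : ℝ) : Measurable (psiC α) := by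
  unfold psiC
  refine Measurable.ite measurableSet_Ioo ?_ measurable_const
  exact (measurable_infDist).pow_const α

theorem measurableSet_RP (α : ℝ) (n k : ℕ) : MeasurableSet (RP α n k) := by
  have h : Measurable (fun x : ℝ × ℝ => psiC α x.1) := (measurable_psiC α).comp measurable_fst
  refine (measurable_fst measurableSet_Ioo).inter ?_
  exact (measurableSet_lt h measurable_snd).inter (measurableSet_lt measurable_snd (h.const_mul 2))

theorem RP_bound (α s t : ℝ) (n k : ℕ) (hk : k < 2 ^ n) (ht : -1 < t) (ht0 : t ≤ 0)
    (hts : t ≤ s + α) :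
    ∫⁻ x in RP α n k, ENNReal.ofReal (infDist x.1 cantorSet ^ s) ≤
      2 * ENNReal.ofReal (((1 : ℝ) / 3 ^ (n + 1)) ^ (t + 1) / (t + 1)) := by
  set a := lep n k + 1 / 3 ^ (n + 1) with ha
  set b := lep n k + 2 / 3 ^ (n + 1) with hb
  have hl : (0 : ℝ) < 1 / 3 ^ (n + 1) := by positivity
  have hab : b = a + 1 / 3 ^ (n + 1) := by rw [ha, hb]; ring
  have hba : a = b - 1 / 3 ^ (n + 1) := by rw [hab]; ring
  rw [← lintegral_indicator (measurableSet_RP α n k), Measure.volume_eq_prod]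
  refine (lintegral_prod_le _).trans ?_
  calc _ ≤ ∫⁻ x, (Ioo a b).indicator (fun x => ENNReal.ofReal ((x - a) ^ t)
              + ENNReal.ofReal ((b - x) ^ t)) x := by
        refine lintegral_mono fun x => ?_
        by_cases hx : x ∈ Ink n k
        · have hx' : x ∈ Ioo a b := hx
          rw [indicator_of_mem hx']
          have h01 := Ink_sub n k x hx
          have hlow := infDist_lower n k hk x hx
          have hd1 := infDist_le_one x h01
          rw [← ha, ← hb] at hlow
          have hmin : 0 < min (x - a) (b - x) := lt_min (by linarith [hx'.1]) (by linarith [hx'.2])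
          have hd := hmin.trans_le hlow
          have hpsi : psiC α x = infDist x cantorSet ^ α := if_pos h01
          have e : ∀ y, (RP α n k).indicator
              (fun x : ℝ × ℝ => ENNReal.ofReal (infDist x.1 cantorSet ^ s)) (x, y) =
              (Ioo (psiC α x) (2 * psiC α x)).indicator
                (fun _ => ENNReal.ofReal (infDist x cantorSet ^ s)) y := by
            intro y
            by_cases hy : y ∈ Ioo (psiC α x) (2 * psiC α x)
            · rw [indicator_of_mem hy, indicator_of_mem]
              exact ⟨hx, hy.1, hy.2⟩
            · rw [indicator_of_notMem hy, indicator_of_notMem]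
              exact fun h => hy ⟨h.2.1, h.2.2⟩
          simp_rw [e]
          rw [lintegral_indicator_const measurableSet_Ioo, Real.volume_Ioo, hpsi,
            ← ENNReal.ofReal_mul (by positivity), ← ENNReal.ofReal_add
              (Real.rpow_nonneg (by linarith [hx'.1]) _) (Real.rpow_nonneg (by linarith [hx'.2]) _)]
          apply ENNReal.ofReal_le_ofReal
          rw [two_mul, add_sub_cancel_right, ← Real.rpow_add hd]
          have p1 : 0 ≤ (x - a) ^ t := Real.rpow_nonneg (by linarith [hx'.1]) _
          have p2 : 0 ≤ (b - x) ^ t := Real.rpow_nonneg (by linarith [hx'.2]) _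
          calc _ ≤ infDist x cantorSet ^ t := Real.rpow_le_rpow_of_exponent_ge hd hd1 hts
            _ ≤ min (x - a) (b - x) ^ t := Real.rpow_le_rpow_of_nonpos hmin hlow ht0
            _ ≤ _ := by
              rcases min_choice (x - a) (b - x) with h | h <;> rw [h] <;> linarith
        · have : ∀ y, (RP α n k).indicator
              (fun x : ℝ × ℝ => ENNReal.ofReal (infDist x.1 cantorSet ^ s)) (x, y) = 0 :=
            fun y => indicator_of_notMem (fun h => hx h.1) _
          simp [this]
    _ = 2 * ENNReal.ofReal (((1 : ℝ) / 3 ^ (n + 1)) ^ (t + 1) / (t + 1)) := by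
        rw [lintegral_indicator measurableSet_Ioo, lintegral_add_left (by fun_prop), two_mul]
        congr 1
        · rw [hab, lint_left _ _ _ hl ht]
        · rw [hba, lint_right _ _ _ hl ht]

theorem summ_aux (u : ℝ) (hu : Real.log 2 / Real.log 3 < u) :
    Summable (fun n : ℕ => (2 : ℝ) ^ n * ((3 : ℝ) ^ (-(n : ℝ))) ^ u) := by
  have h3 : 0 < Real.log 3 := Real.log_pos (by norm_num)
  have e : (fun n : ℕ => (2 : ℝ) ^ n * ((3 : ℝ) ^ (-(n : ℝ))) ^ u) =
      fun n : ℕ => (2 * (3 : ℝ) ^ (-u)) ^ n := by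
    funext n
    rw [mul_pow, ← Real.rpow_mul (by norm_num), ← Real.rpow_natCast (3 ^ (-u)),
      ← Real.rpow_mul (by norm_num)]
    congr 2; ring
  rw [e]
  refine summable_geometric_of_lt_one (by positivity) ?_
  rw [div_lt_iff₀ h3] at hu
  have : (2 : ℝ) < 3 ^ u := by
    rw [← Real.log_lt_log_iff (by norm_num) (by positivity), Real.log_rpow (by norm_num)]
    exact hu
  rw [Real.rpow_neg (by norm_num), ← div_eq_mul_inv, div_lt_one (by positivity)]
  exact this

/-- For the admissible range of `p` and `q`, the integral of
`dist(x₁, C)^{(α−1)pq/(p−q)}` over `⋃_{n,k} R⁺_{n,k}` is finite; consequently the series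
`Σ_n 2ⁿ (3^{−n})^{1+α+(α−1)pq/(p−q)}` converges. -/
theorem integral_weight_RPall_finite (α p q : ℝ)
    (hα₁ : Real.log 2 / (2 * Real.log 3) < α) (hα₂ : α < 1)
    (hp : ((1 + α) - Real.log 2 / Real.log 3) / (2 * α - Real.log 2 / Real.log 3) < p)
    (hq₁ : 1 ≤ q)
    (hq₂ : q < ((1 + α) - Real.log 2 / Real.log 3) * p /
        ((1 + α) - Real.log 2 / Real.log 3 + (1 - α) * p)) :
    (∫⁻ x in RPall α,
        ENNReal.ofReal (infDist x.1 cantorSet ^ ((α - 1) * p * q / (p - q)))) < ⊤ ∧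
    Summable (fun n : ℕ =>
      (2 : ℝ) ^ n * ((3 : ℝ) ^ (-(n : ℝ))) ^ (1 + α + (α - 1) * p * q / (p - q))) := by
  have h3 : 0 < Real.log 3 := Real.log_pos (by norm_num)
  have h2 : 0 < Real.log 2 := Real.log_pos (by norm_num)
  have hL1 : Real.log 2 / Real.log 3 < 1 := by
    rw [div_lt_one h3]; exact Real.log_lt_log (by norm_num) (by norm_num)
  have hL0 : 0 < Real.log 2 / Real.log 3 := by positivity
  have hLα : Real.log 2 / Real.log 3 < 2 * α := by
    have : Real.log 2 / (2 * Real.log 3) = (Real.log 2 / Real.log 3) / 2 := by field_simp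
    linarith
  have hsum : Real.log 2 / Real.log 3 < 1 + α + (α - 1) * p * q / (p - q) := by
    generalize Real.log 2 / Real.log 3 = L at *
    have hA : 0 < 1 + α - L := by linarith
    have hp0 : 0 < p := lt_trans (div_pos hA (by linarith)) hp
    have hα' : 0 < 1 - α := by linarith
    have hD : 0 < 1 + α - L + (1 - α) * p := by positivity
    rw [lt_div_iff₀ hD] at hq₂
    have hq0 : 0 < q := by linarith
    have hm : 0 < (1 - α) * p * q := by positivity
    have hpq : 0 < p - q := by
      by_contra! h
      nlinarith
    have : -(1 + α - L) < (α - 1) * p * q / (p - q) := by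
      rw [lt_div_iff₀ hpq]; nlinarith
    linarith
  refine ⟨?_, summ_aux _ hsum⟩
  set s := (α - 1) * p * q / (p - q) with hs
  set t := min (s + α) 0 with ht
  have ht1 : Real.log 2 / Real.log 3 < t + 1 := by
    rcases min_choice (s + α) 0 with h | h <;> rw [ht, h] <;> linarith
  have htm : -1 < t := by linarith
  have hS := summ_aux _ ht1
  have hS' : Summable (fun n : ℕ =>
      (2 : ℝ) ^ n * (2 * (((1 : ℝ) / 3 ^ (n + 1)) ^ (t + 1) / (t + 1)))) := by
    refine (((summable_nat_add_iff 1).2 hS).mul_left (1 / (t + 1))).congr fun n => ?_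
    rw [Real.rpow_neg (by norm_num), Real.rpow_natCast, pow_succ 2, one_div, one_div]
    ring
  refine lt_of_le_of_lt (b := ∑' n : ℕ, ENNReal.ofReal
      ((2 : ℝ) ^ n * (2 * (((1 : ℝ) / 3 ^ (n + 1)) ^ (t + 1) / (t + 1))))) ?_ ?_
  · refine (lintegral_iUnion_le _ _).trans (ENNReal.tsum_le_tsum fun n => ?_)
    have e : (⋃ k ∈ {k : ℕ | k < 2 ^ n}, RP α n k) = ⋃ k : Fin (2 ^ n), RP α n k := by
      ext x; simp only [mem_iUnion, mem_ofPred_eq]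
      exact ⟨fun ⟨k, hk, h⟩ => ⟨⟨k, hk⟩, h⟩, fun ⟨k, h⟩ => ⟨k, k.2, h⟩⟩
    rw [e]
    refine (lintegral_iUnion_le _ _).trans ?_
    refine (ENNReal.tsum_le_tsum fun k : Fin (2 ^ n) =>
      RP_bound α s t n k k.2 htm (min_le_right _ _) (min_le_left _ _)).trans ?_
    rw [tsum_fintype, Finset.sum_const, Finset.card_univ, Fintype.card_fin, nsmul_eq_mul,
      ENNReal.ofReal_mul (by positivity), ENNReal.ofReal_mul (by positivity)]
    apply le_of_eq
    congr 1
    · rw [ENNReal.ofReal_pow (by norm_num)]; simp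
    · simp
  · exact hS'.tsum_ofReal_lt_top
end
end
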